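/- arXiv:2301.05153 — 2 statements merged into one kernel-verified Lean document; each statement's English description precedes it below -/
import Mathlib

section
/- Let m be a multicore with core block C and such that |γ^{jk}_{il}(m)| ≤ 2 for all i,l ∈ {0,…,e−1} and j,k ∈ {1,…,r}. Suppose that μ is a multicore in the core block C. Fix ī ∈ ℤ/eℤ, and let d and d' be the integers such that d_ī(m) = d − 1 and d_ī(μ) = d' − 1. Then d' ≤ d + 1. -/
/-!
Combinatorial framework for multipartitions, residues, β-sets, abacus levels,
weights, hubs, core blocks and Scopes-type moves, following Fayers and the paper.
Rows and columns of Young diagrams are indexed from 0, so the node in row `b`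
and column `c` (0-based) of component `j` has residue `a j + c - b` mod `e`.
-/

open scoped Classical

namespace AK

/-- A partition, given by its (antitone, finitely supported) sequence of parts,
rows indexed from `0`. -/
structure PartitionFun : Type where
  part : ℕ → ℕ
  antitone : Antitone part
  finite_support : ∃ N, ∀ b, N ≤ b → part b = 0

/-- The node in row `b`, column `c` (0-based) belongs to the Young diagram. -/
def PartitionFun.InDiag (lam : PartitionFun) (b c : ℕ) : Prop := c < lam.part b

/-- The node `(b,c)` is removable: deleting it leaves the diagram of a partition. -/
def PartitionFun.Removable (lam : PartitionFun) (b c : ℕ) : Prop :=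
  lam.part b = c + 1 ∧ lam.part (b + 1) ≤ c

/-- The node `(b,c)` is addable: adjoining it gives the diagram of a partition. -/
def PartitionFun.Addable (lam : PartitionFun) (b c : ℕ) : Prop :=
  lam.part b = c ∧ (b = 0 ∨ lam.part b < lam.part (b - 1))

/-- An `r`-multipartition. -/
abbrev Multipartition (r : ℕ) := Fin r → PartitionFun

/-- Nodes: `(b, c, j)` with row `b`, column `c`, component `j`. -/
abbrev Node (r : ℕ) := ℕ × ℕ × Fin r

/-- The Young diagram of a multipartition, as a set of nodes. -/
def diag {r : ℕ} (lam : Multipartition r) : Set (Node r) :=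
  {x | (lam x.2.2).InDiag x.1 x.2.1}

/-- The size `n` of a multipartition of `n`. -/
noncomputable def msize {r : ℕ} (lam : Multipartition r) : ℕ :=
  Set.ncard (diag lam)

/-- `c_i(λ)`: the number of nodes of residue `i` (mod `e`). -/
noncomputable def nodeCount {r : ℕ} (e : ℕ) (a : Fin r → ℤ) (lam : Multipartition r)
    (i : ℤ) : ℕ :=
  Set.ncard {x : Node r | (lam x.2.2).InDiag x.1 x.2.1 ∧
    (a x.2.2 + (x.2.1 : ℤ) - (x.1 : ℤ)) % (e : ℤ) = i % e}

/-- Number of removable nodes of residue `i` in component `j`. -/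
noncomputable def removableCount {r : ℕ} (e : ℕ) (a : Fin r → ℤ) (lam : Multipartition r)
    (i : ℤ) (j : Fin r) : ℕ :=
  Set.ncard {p : ℕ × ℕ | (lam j).Removable p.1 p.2 ∧
    (a j + (p.2 : ℤ) - (p.1 : ℤ)) % (e : ℤ) = i % e}

/-- Number of addable nodes of residue `i` in component `j`. -/
noncomputable def addableCount {r : ℕ} (e : ℕ) (a : Fin r → ℤ) (lam : Multipartition r)
    (i : ℤ) (j : Fin r) : ℕ :=
  Set.ncard {p : ℕ × ℕ | (lam j).Addable p.1 p.2 ∧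
    (a j + (p.2 : ℤ) - (p.1 : ℤ)) % (e : ℤ) = i % e}

/-- `δ^j_i(λ)` = (removable `i`-nodes of component `j`) − (addable `i`-nodes of component `j`). -/
noncomputable def delta {r : ℕ} (e : ℕ) (a : Fin r → ℤ) (lam : Multipartition r)
    (i : ℤ) (j : Fin r) : ℤ :=
  (removableCount e a lam i j : ℤ) - (addableCount e a lam i j : ℤ)

/-- The hub `δ_i(λ) = Σ_j δ^j_i(λ)`. -/
noncomputable def hub {r : ℕ} (e : ℕ) (a : Fin r → ℤ) (lam : Multipartition r) (i : ℤ) : ℤ :=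
  ∑ j : Fin r, delta e a lam i j

/-- Two multipartitions have the same hub. -/
def SameHub {r : ℕ} (e : ℕ) (a : Fin r → ℤ) (lam mu : Multipartition r) : Prop :=
  ∀ i : ℤ, hub e a lam i = hub e a mu i

/-- `d_i(m) = min { δ^j_i(m) : 1 ≤ j ≤ r }`. -/
noncomputable def dmin {r : ℕ} (e : ℕ) (a : Fin r → ℤ) (lam : Multipartition r) (i : ℤ) : ℤ :=
  sInf {x : ℤ | ∃ j : Fin r, delta e a lam i j = x}

/-- The weight `w(λ) = Σ_j c_{a_j}(λ) − (1/2) Σ_{i∈ℤ/eℤ} (c_i(λ) − c_{i+1}(λ))²`. -/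
noncomputable def weight {r : ℕ} (e : ℕ) (a : Fin r → ℤ) (lam : Multipartition r) : ℚ :=
  (∑ j : Fin r, (nodeCount e a lam (a j) : ℚ)) -
    (1 / 2 : ℚ) * ∑ i ∈ Finset.range e,
      ((nodeCount e a lam (i : ℤ) : ℚ) - (nodeCount e a lam ((i : ℤ) + 1) : ℚ)) ^ 2

/-- The β-set `B^j = {λ_b + a_j − b : b ≥ 1}` (here with rows indexed from 0). -/
def betaSet (aj : ℤ) (lam : PartitionFun) : Set ℤ :=
  {x | ∃ b : ℕ, x = (lam.part b : ℤ) + aj - ((b : ℤ) + 1)}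

/-- A partition is an `e`-core: `β ∈ B` implies `β − e ∈ B`. -/
def IsECore (e : ℕ) (aj : ℤ) (lam : PartitionFun) : Prop :=
  ∀ x ∈ betaSet aj lam, x - (e : ℤ) ∈ betaSet aj lam

/-- A multicore: all components are `e`-cores. -/
def IsMulticore {r : ℕ} (e : ℕ) (a : Fin r → ℤ) (lam : Multipartition r) : Prop :=
  ∀ j, IsECore e (a j) (lam j)

/-- `ℓ^a_{ij}(λ)`: the level of the lowest bead on runner `i`, i.e. the largest `x`
with `x·e + i` in the β-set. -/
noncomputable def level (e : ℕ) (aj : ℤ) (lam : PartitionFun) (i : ℕ) : ℤ :=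
  sSup {x : ℤ | x * (e : ℤ) + (i : ℤ) ∈ betaSet aj lam}

/-- `γ^{jk}_i(λ) = ℓ^a_{ij}(λ) − ℓ^a_{ik}(λ)`. -/
noncomputable def gamma {r : ℕ} (e : ℕ) (a : Fin r → ℤ) (lam : Multipartition r)
    (i : ℕ) (j k : Fin r) : ℤ :=
  level e (a j) (lam j) i - level e (a k) (lam k) i

/-- `γ^{jk}_{il}(λ) = γ^{jk}_i(λ) − γ^{jk}_l(λ)`. -/
noncomputable def gammaD {r : ℕ} (e : ℕ) (a : Fin r → ℤ) (lam : Multipartition r)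
    (i l : ℕ) (j k : Fin r) : ℤ :=
  gamma e a lam i j k - gamma e a lam l j k

/-- Move a bead from runner `i` to runner `l` in the β-set `S`: replace the largest
element of `S` congruent to `i` mod `e` by the smallest integer congruent to `l`
mod `e` not in `S`. -/
noncomputable def moveBead (e : ℕ) (i l : ℕ) (S : Set ℤ) : Set ℤ :=
  insert (sInf {x : ℤ | x % (e : ℤ) = (l : ℤ) % e ∧ x ∉ S})
    (S \ {sSup {x : ℤ | x % (e : ℤ) = (i : ℤ) % e ∧ x ∈ S}})

/-- The effect of `s^{jk}_{il}` on the tuple of β-sets: move a bead from runner `i`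
to runner `l` in component `j`, and from runner `l` to runner `i` in component `k`. -/
noncomputable def swapSets {r : ℕ} (e i l : ℕ) (j k : Fin r) (S : Fin r → Set ℤ) :
    Fin r → Set ℤ :=
  Function.update (Function.update S j (moveBead e i l (S j))) k
    (moveBead e l i (Function.update S j (moveBead e i l (S j)) k))

/-- `m' = s^{jk}_{il}(m)`, expressed via β-sets. -/
def IsSwap {r : ℕ} (e : ℕ) (a : Fin r → ℤ) (i l : ℕ) (j k : Fin r)
    (m m' : Multipartition r) : Prop :=
  ∀ j', betaSet (a j') (m' j') = swapSets e i l j k (fun t => betaSet (a t) (m t)) j'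

/-- `λ` lies in a core block: its weight is minimal among the weights of all
multipartitions with the same hub. -/
def MinimalWeight {r : ℕ} (e : ℕ) (a : Fin r → ℤ) (lam : Multipartition r) : Prop :=
  ∀ mu : Multipartition r, SameHub e a lam mu → weight e a lam ≤ weight e a mu

/-- `(b_0,…,b_{e−1})` is a base tuple for `mu` with respect to the multicharge `a'`
(congruent to `a` componentwise mod `e`): each `ℓ^{a'}_{ij}(mu)` is `b i` or `b i + 1`. -/
def IsBaseTuple {r : ℕ} (e : ℕ) (a : Fin r → ℤ) (mu : Multipartition r)
    (a' : Fin r → ℤ) (b : ℕ → ℤ) : Prop :=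
  (∀ j, (e : ℤ) ∣ (a' j - a j)) ∧
    ∀ i < e, ∀ j, level e (a' j) (mu j) i = b i ∨ level e (a' j) (mu j) i = b i + 1

/-- `K_i(C)` for the core block of `mu`: among all base tuples (over all admissible
multicharges), take `b i` maximal and then `b (i−1)` minimal, and set
`K_i = b_i − b_{i−1} − 1` for `i ≠ 0`, `K_0 = b_0 − b_{e−1} − 2`. -/
noncomputable def Kconst {r : ℕ} (e : ℕ) (a : Fin r → ℤ) (mu : Multipartition r)
    (i : ℕ) : ℤ :=
  let Bi : ℤ := sSup {x : ℤ | ∃ a' bt, IsBaseTuple e a mu a' bt ∧ bt i = x}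
  let iprev : ℕ := if i = 0 then e - 1 else i - 1
  let Bp : ℤ := sInf {x : ℤ | ∃ a' bt, IsBaseTuple e a mu a' bt ∧ bt i = Bi ∧ bt iprev = x}
  Bi - Bp - (if i = 0 then 2 else 1)

/-- The map `φ_i : ℤ → ℤ`. -/
def phiMap (e i : ℕ) (x : ℤ) : ℤ :=
  if x % (e : ℤ) = ((i : ℤ) - 1) % e then x + 1
  else if x % (e : ℤ) = (i : ℤ) % e then x - 1
  else x

/-- Lexicographic order on multipartitions: `λ > μ`. -/
def lexGT {r : ℕ} (lam mu : Multipartition r) : Prop :=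
  ∃ j : Fin r, (∀ j' < j, (lam j').part = (mu j').part) ∧
    ∃ i : ℕ, (∀ i' < i, (lam j).part i' = (mu j).part i') ∧
      (mu j).part i < (lam j).part i

/-- `x` is above `y`: `j < j'` or (`j = j'` and `b < b'`). -/
def NodeAbove {r : ℕ} (x y : Node r) : Prop :=
  x.2.2 < y.2.2 ∨ (x.2.2 = y.2.2 ∧ x.1 < y.1)

/-- The order on nodes: `x < y` iff `y` is above `x`. -/
def NodeLT {r : ℕ} (x y : Node r) : Prop := NodeAbove y x

/-- `N_A(λ)` = (addable `i`-nodes of `λ` below `A`) − (removable `i`-nodes of `λ` below `A`). -/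
noncomputable def Nfac {r : ℕ} (e : ℕ) (a : Fin r → ℤ) (lam : Multipartition r)
    (i : ℤ) (A : Node r) : ℤ :=
  (Set.ncard {y : Node r | (lam y.2.2).Addable y.1 y.2.1 ∧
      (a y.2.2 + (y.2.1 : ℤ) - (y.1 : ℤ)) % (e : ℤ) = i % e ∧ NodeAbove A y} : ℤ) -
  (Set.ncard {y : Node r | (lam y.2.2).Removable y.1 y.2.1 ∧
      (a y.2.2 + (y.2.1 : ℤ) - (y.1 : ℤ)) % (e : ℤ) = i % e ∧ NodeAbove A y} : ℤ)

/-- `lam` is obtained from `mu` by adding one `e`-rim hook to some component: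
on β-sets, some `β ∈ B^j` with `β + e ∉ B^j` is replaced by `β + e`. -/
def AddRimHook {r : ℕ} (e : ℕ) (a : Fin r → ℤ) (mu lam : Multipartition r) : Prop :=
  ∃ (j : Fin r) (β : ℤ), β ∈ betaSet (a j) (mu j) ∧ β + (e : ℤ) ∉ betaSet (a j) (mu j) ∧
    betaSet (a j) (lam j) = insert (β + (e : ℤ)) (betaSet (a j) (mu j) \ {β}) ∧
    ∀ j' ≠ j, betaSet (a j') (lam j') = betaSet (a j') (mu j')

/-- The number of inversions (length) of a permutation of `Fin d`. -/
noncomputable def permLength (d : ℕ) (σ : Equiv.Perm (Fin d)) : ℕ :=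
  (Finset.univ.filter (fun p : Fin d × Fin d => p.1 < p.2 ∧ σ p.2 < σ p.1)).card

theorem beta_strict (lam : PartitionFun) {b b' : ℕ} (h : b < b') :
    (lam.part b' : ℤ) - b' < (lam.part b : ℤ) - b := by
  have := lam.antitone h.le
  omega

theorem rem_iff (aj : ℤ) (lam : PartitionFun) (b c : ℕ) :
    lam.Removable b c ↔ (lam.part b : ℤ) + aj - ((b : ℤ) + 1) = aj + c - b ∧
      aj + (c : ℤ) - b - 1 ∉ betaSet aj lam := by
  constructor
  · rintro ⟨h1, h2⟩
    refine ⟨by omega, ?_⟩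
    rintro ⟨b', hb'⟩
    rcases lt_trichotomy b b' with h | h | h
    · rcases Nat.lt_or_ge (b + 1) b' with h' | h'
      · have := beta_strict lam h'
        push_cast at this
        omega
      · have : b' = b + 1 := by omega
        subst this
        push_cast at hb'
        omega
    · subst h; omega
    · have := beta_strict lam h
      omega
  · rintro ⟨h1, h2⟩
    refine ⟨by omega, ?_⟩
    by_contra h
    apply h2
    have := lam.antitone (Nat.le_succ b)
    refine ⟨b + 1, ?_⟩
    simp only [Nat.succ_eq_add_one] at this
    push_cast
    omega

theorem add_iff (aj : ℤ) (lam : PartitionFun) (b c : ℕ) :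
    lam.Addable b c ↔ (lam.part b : ℤ) + aj - ((b : ℤ) + 1) = aj + c - b - 1 ∧
      aj + (c : ℤ) - b ∉ betaSet aj lam := by
  constructor
  · rintro ⟨h1, h2⟩
    refine ⟨by omega, ?_⟩
    rintro ⟨b', hb'⟩
    rcases lt_trichotomy b b' with h | h | h
    · have := beta_strict lam h
      omega
    · subst h; omega
    · have h3 := lam.antitone (show b' ≤ b - 1 by omega)
      omega
  · rintro ⟨h1, h2⟩
    refine ⟨by omega, ?_⟩
    by_contra h
    push Not at h
    apply h2
    have := lam.antitone (Nat.sub_le b 1)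
    refine ⟨b - 1, ?_⟩
    omega

theorem beta_inj (aj : ℤ) (lam : PartitionFun) {b b' : ℕ}
    (h : (lam.part b : ℤ) + aj - ((b : ℤ) + 1) = (lam.part b' : ℤ) + aj - ((b' : ℤ) + 1)) :
    b = b' := by
  rcases lt_trichotomy b b' with h' | h' | h'
  · have := beta_strict lam h'
    omega
  · exact h'
  · have := beta_strict lam h'
    omega

theorem removableCount_eq {r : ℕ} (e : ℕ) (he : 0 < e) (a : Fin r → ℤ) (lam : Multipartition r)
    (i : ℤ) (j : Fin r) : removableCount e a lam i j =
      Set.ncard {x : ℤ | x * e + i % e ∈ betaSet (a j) (lam j) ∧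
        x * e + i % e - 1 ∉ betaSet (a j) (lam j)} := by
  have he' : (0 : ℤ) < e := by exact_mod_cast he
  have key : ∀ y : ℤ, y % e = i % e → y / e * e + i % e = y := by
    intro y hy
    rw [← hy, Int.ediv_mul_add_emod]
  unfold removableCount
  refine Set.ncard_congr (fun p _ => (a j + (p.2 : ℤ) - p.1) / e) ?_ ?_ ?_
  · rintro ⟨b, c⟩ ⟨h1, h2⟩
    rw [rem_iff (a j)] at h1
    simp only [Set.mem_setOf_eq]
    rw [key _ h2]
    exact ⟨⟨b, h1.1.symm⟩, h1.2⟩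
  · rintro ⟨b, c⟩ ⟨b', c'⟩ ⟨h1, h2⟩ ⟨h1', h2'⟩ h
    rw [rem_iff (a j)] at h1 h1'
    simp only at h h1 h1' h2 h2'
    have k1 := key _ h2
    have k2 := key _ h2'
    rw [h, k2] at k1
    have : b = b' := beta_inj (a j) (lam j) (by omega)
    subst this
    simp only [Prod.mk.injEq, true_and]
    omega
  · rintro x ⟨⟨b, hb⟩, h2⟩
    have hpos : 0 < (lam j).part b := by
      by_contra h0
      apply h2
      have := (lam j).antitone (Nat.le_succ b)
      refine ⟨b + 1, ?_⟩
      simp only [Nat.succ_eq_add_one] at this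
      push_cast
      omega
    have hy : a j + (((lam j).part b - 1 : ℕ) : ℤ) - b = x * e + i % e := by omega
    refine ⟨(b, (lam j).part b - 1), ⟨?_, ?_⟩, ?_⟩
    · rw [rem_iff (a j)]
      simp only
      rw [hy]
      exact ⟨hb.symm, h2⟩
    · simp only
      rw [hy]
      simp
    · simp only
      rw [hy, add_comm, Int.add_mul_ediv_right _ _ he'.ne',
        Int.ediv_eq_zero_of_lt (Int.emod_nonneg _ he'.ne') (Int.emod_lt_of_pos _ he')]
      simp

theorem addableCount_eq {r : ℕ} (e : ℕ) (he : 0 < e) (a : Fin r → ℤ) (lam : Multipartition r)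
    (i : ℤ) (j : Fin r) : addableCount e a lam i j =
      Set.ncard {x : ℤ | x * e + i % e - 1 ∈ betaSet (a j) (lam j) ∧
        x * e + i % e ∉ betaSet (a j) (lam j)} := by
  have he' : (0 : ℤ) < e := by exact_mod_cast he
  have key : ∀ y : ℤ, y % e = i % e → y / e * e + i % e = y := by
    intro y hy
    rw [← hy, Int.ediv_mul_add_emod]
  unfold addableCount
  refine Set.ncard_congr (fun p _ => (a j + (p.2 : ℤ) - p.1) / e) ?_ ?_ ?_
  · rintro ⟨b, c⟩ ⟨h1, h2⟩
    rw [add_iff (a j)] at h1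
    simp only [Set.mem_setOf_eq]
    rw [key _ h2]
    exact ⟨⟨b, h1.1.symm⟩, h1.2⟩
  · rintro ⟨b, c⟩ ⟨b', c'⟩ ⟨h1, h2⟩ ⟨h1', h2'⟩ h
    rw [add_iff (a j)] at h1 h1'
    simp only at h h1 h1' h2 h2'
    have k1 := key _ h2
    have k2 := key _ h2'
    rw [h, k2] at k1
    have : b = b' := beta_inj (a j) (lam j) (by omega)
    subst this
    simp only [Prod.mk.injEq, true_and]
    omega
  · rintro x ⟨⟨b, hb⟩, h2⟩
    have hy : a j + (((lam j).part b : ℕ) : ℤ) - b = x * e + i % e := by omega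
    refine ⟨(b, (lam j).part b), ⟨?_, ?_⟩, ?_⟩
    · rw [add_iff (a j)]
      simp only
      rw [hy]
      exact ⟨hb.symm, h2⟩
    · simp only
      rw [hy]
      simp
    · simp only
      rw [hy, add_comm, Int.add_mul_ediv_right _ _ he'.ne',
        Int.ediv_eq_zero_of_lt (Int.emod_nonneg _ he'.ne') (Int.emod_lt_of_pos _ he')]
      simp

theorem mem_iff_level (e : ℕ) (he : 0 < e) (aj : ℤ) (lam : PartitionFun)
    (hc : IsECore e aj lam) (i : ℕ) (x : ℤ) :
    x * e + i ∈ betaSet aj lam ↔ x ≤ level e aj lam i := by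
  have he' : (1 : ℤ) ≤ e := by exact_mod_cast he
  have hbdd : BddAbove {x : ℤ | x * (e : ℤ) + (i : ℤ) ∈ betaSet aj lam} := by
    refine ⟨|(lam.part 0 : ℤ) + aj|, ?_⟩
    rintro y ⟨b, hb⟩
    have h0 := lam.antitone (Nat.zero_le b)
    by_contra hlt
    push Not at hlt
    have h1 := le_abs_self ((lam.part 0 : ℤ) + aj)
    have h2 := abs_nonneg ((lam.part 0 : ℤ) + aj)
    have : y ≤ y * e := le_mul_of_one_le_right (by omega) he'
    omega
  have hne : {x : ℤ | x * (e : ℤ) + (i : ℤ) ∈ betaSet aj lam}.Nonempty := by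
    obtain ⟨N, hN⟩ := lam.finite_support
    set M : ℤ := |aj| + N + i + 1 with hM
    have h1 := neg_abs_le aj
    have h2 := abs_nonneg aj
    have : M ≤ M * e := le_mul_of_one_le_right (by omega) he'
    refine ⟨-M, (aj - 1 - (-M * e + i)).toNat, ?_⟩
    have h3 : -M * e = -(M * e) := by ring
    rw [hN _ (by omega)]
    omega
  have hdown : ∀ (n : ℕ) (y : ℤ), y * e + i ∈ betaSet aj lam →
      (y - n) * e + i ∈ betaSet aj lam := by
    intro n
    induction n with
    | zero => intro y hy; simpa using hy
    | succ k ih =>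
      intro y hy
      have := hc _ (ih y hy)
      convert this using 1
      push_cast
      ring
  constructor
  · intro h
    exact le_csSup hbdd h
  · intro h
    have hm := Int.csSup_mem hne hbdd
    have := hdown (level e aj lam i - x).toNat _ hm
    have h2 : ((level e aj lam i - x).toNat : ℤ) = level e aj lam i - x := by omega
    rw [h2] at this
    convert this using 2
    unfold level
    ring

theorem delta_eq_of {r : ℕ} (e : ℕ) (he : 0 < e) (a : Fin r → ℤ) (lam : Multipartition r)
    (i : ℤ) (j : Fin r) (s t : ℤ)
    (hs : ∀ x : ℤ, x * e + i % e ∈ betaSet (a j) (lam j) ↔ x ≤ s)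
    (ht : ∀ x : ℤ, x * e + i % e - 1 ∈ betaSet (a j) (lam j) ↔ x ≤ t) :
    delta e a lam i j = s - t := by
  unfold delta
  rw [removableCount_eq e he, addableCount_eq e he]
  simp only [hs, ht]
  have h1 : {x : ℤ | x ≤ s ∧ ¬ x ≤ t} = ↑(Finset.Ioc t s) := by
    ext x; simp only [Set.mem_setOf_eq, Finset.coe_Ioc, Set.mem_Ioc]; omega
  have h2 : {x : ℤ | x ≤ t ∧ ¬ x ≤ s} = ↑(Finset.Ioc s t) := by
    ext x; simp only [Set.mem_setOf_eq, Finset.coe_Ioc, Set.mem_Ioc]; omega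
  rw [h1, h2, Set.ncard_coe_finset, Set.ncard_coe_finset, Int.card_Ioc, Int.card_Ioc]
  omega

theorem delta_eq {r : ℕ} (e : ℕ) (he : 0 < e) (a : Fin r → ℤ) (lam : Multipartition r)
    (hcore : IsMulticore e a lam) (i : ℤ) :
    ∃ i0 < e, ∃ l0 < e, ∃ c : ℤ, ∀ j, delta e a lam i j =
      level e (a j) (lam j) i0 - level e (a j) (lam j) l0 - c := by
  have he' : (0 : ℤ) < e := by exact_mod_cast he
  have h0 := Int.emod_nonneg i he'.ne'
  have h1 := Int.emod_lt_of_pos i he'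
  obtain ⟨k, hk⟩ := Int.eq_ofNat_of_zero_le h0
  have hke : k < e := by omega
  rcases Nat.eq_zero_or_pos k with h | h
  · subst h
    refine ⟨0, he, e - 1, by omega, 1, fun j => ?_⟩
    rw [delta_eq_of e he a lam i j (level e (a j) (lam j) 0) (level e (a j) (lam j) (e - 1) + 1)]
    · ring
    · intro x
      rw [hk]
      exact mem_iff_level e he _ _ (hcore j) 0 x
    · intro x
      rw [hk, ← sub_le_iff_le_add, ← mem_iff_level e he _ _ (hcore j)]
      have : (x - 1) * (e : ℤ) + ((e - 1 : ℕ) : ℤ) = x * e + ((0 : ℕ) : ℤ) - 1 := by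
        rw [Nat.cast_sub (by omega)]
        push_cast
        ring
      rw [this]
  · refine ⟨k, hke, k - 1, by omega, 0, fun j => ?_⟩
    rw [delta_eq_of e he a lam i j (level e (a j) (lam j) k) (level e (a j) (lam j) (k - 1))]
    · ring
    · intro x
      rw [hk]
      exact mem_iff_level e he _ _ (hcore j) k x
    · intro x
      rw [hk, ← mem_iff_level e he _ _ (hcore j)]
      have : x * (e : ℤ) + ((k - 1 : ℕ) : ℤ) = x * e + (k : ℤ) - 1 := by
        rw [Nat.cast_sub (by omega)]
        push_cast
        ring
      rw [this]

theorem dmin_spec {r : ℕ} (hr : 0 < r) (e : ℕ) (a : Fin r → ℤ) (lam : Multipartition r) (i : ℤ) :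
    (∃ j, delta e a lam i j = dmin e a lam i) ∧ ∀ j, dmin e a lam i ≤ delta e a lam i j := by
  have hb : BddBelow {x : ℤ | ∃ j : Fin r, delta e a lam i j = x} :=
    (Set.finite_range (fun j : Fin r => delta e a lam i j)).bddBelow
  have hn : {x : ℤ | ∃ j : Fin r, delta e a lam i j = x}.Nonempty := ⟨_, ⟨0, hr⟩, rfl⟩
  exact ⟨Int.csInf_mem hn hb, fun j => csInf_le hb ⟨j, rfl⟩⟩

/-- Lemma 4.5: let `m` be a multicore with `|γ^{jk}_{il}(m)| ≤ 2`
for all `i,l,j,k`, and let `μ` be a multicore in the core block of `m`.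
If `d_ī(m) = d − 1` and `d_ī(μ) = d' − 1`, then `d' ≤ d + 1`. -/
theorem stmt_4 {e r : ℕ} (he : 2 ≤ e) (hr : 0 < r) (a : Fin r → ℤ)
    (m : Multipartition r) (hcore : IsMulticore e a m)
    (hg : ∀ i < e, ∀ l < e, ∀ j k : Fin r, |gammaD e a m i l j k| ≤ 2)
    (mu : Multipartition r) (hmucore : IsMulticore e a mu)
    (hsame : SameHub e a m mu) (hmin : MinimalWeight e a mu)
    (ibar : ℤ) (d d' : ℤ) (hd : dmin e a m ibar = d - 1)
    (hd' : dmin e a mu ibar = d' - 1) :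
    d' ≤ d + 1 := by
  obtain ⟨i0, hi0, l0, hl0, c, hdel⟩ := delta_eq e (by omega) a m hcore ibar
  obtain ⟨⟨j0, hj0⟩, -⟩ := dmin_spec hr e a m ibar
  obtain ⟨-, hmu⟩ := dmin_spec hr e a mu ibar
  by_contra hlt
  push Not at hlt
  have h1 : ∀ j, delta e a m ibar j ≤ d + 1 := by
    intro j
    have h := (abs_le.mp (hg i0 hi0 l0 hl0 j j0)).2
    have e1 := hdel j
    have e2 := hdel j0
    unfold gammaD gamma at h
    omega
  have hs := hsame ibar
  unfold hub at hs
  have : ∑ j, delta e a m ibar j < ∑ j, delta e a mu ibar j := by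
    refine Finset.sum_lt_sum (fun j _ => ?_) ⟨j0, Finset.mem_univ _, ?_⟩
    · have := h1 j
      have := hmu j
      omega
    · have := hmu j0
      omega
  omega

end AK
end

section
/- Let m be a multicore. Suppose that m = m_0, m_1, …, m_v is a sequence of multicores such that m_{t+1} = s^{jk}_{il}(m_t) for some i,l ∈ {0,…,e−1} and j,k ∈ {1,…,r}, and w(m_{t+1}) < w(m_t), for all t = 0,…,v−1. Let h > 0 be such that w(m) = w(m_v) + hr. Fix ī ∈ ℤ/eℤ. Then d_ī(m) ≥ d_ī(m_v) − h. -/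
/-!
Combinatorial framework for multipartitions, residues, β-sets, abacus levels,
weights, hubs, core blocks and Scopes-type moves, following Fayers and the paper.
Rows and columns of Young diagrams are indexed from 0, so the node in row `b`
and column `c` (0-based) of component `j` has residue `a j + c - b` mod `e`.
-/

open scoped Classical

namespace AK

section helpers

open Filter Finset

/-- bead position of row `b` -/
def bead (aj : ℤ) (lam : PartitionFun) (b : ℕ) : ℤ := (lam.part b : ℤ) + aj - ((b : ℤ) + 1)

lemma bead_strictAnti (aj : ℤ) (lam : PartitionFun) : StrictAnti (bead aj lam) := by
  intro b c hbc
  have := lam.antitone hbc.le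
  unfold bead
  omega

lemma ev_zero (lam : PartitionFun) : ∀ᶠ K : ℕ in atTop, ∀ b, K ≤ b → lam.part b = 0 := by
  obtain ⟨N, hN⟩ := lam.finite_support
  filter_upwards [eventually_ge_atTop N] with K hK b hb
  exact hN b (hK.trans hb)

lemma mem_image_bead (aj : ℤ) (lam : PartitionFun) (K : ℕ) (hK : ∀ b, K ≤ b → lam.part b = 0)
    (x : ℤ) : x ∈ (range K).image (bead aj lam) ↔ x ∈ betaSet aj lam ∧ aj - K ≤ x := by
  simp only [Finset.mem_image, Finset.mem_range, betaSet, Set.mem_setOf_eq]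
  constructor
  · rintro ⟨b, hb, rfl⟩
    exact ⟨⟨b, rfl⟩, by unfold bead; omega⟩
  · rintro ⟨⟨b, rfl⟩, h⟩
    refine ⟨b, ?_, rfl⟩
    by_contra hb
    have := hK b (by omega)
    omega

lemma sum_bead (aj : ℤ) (lam : PartitionFun) (K : ℕ) (g : ℤ → ℤ) :
    ∑ b ∈ range K, g (bead aj lam b) = ∑ x ∈ (range K).image (bead aj lam), g x := by
  rw [Finset.sum_image]
  intro x _ y _ h
  exact (bead_strictAnti aj lam).injective h

lemma sum_move (aj : ℤ) (lam lam' : PartitionFun) (β β' : ℤ) (hβ : β ∈ betaSet aj lam)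
    (hβ' : β' ∉ betaSet aj lam)
    (hB : betaSet aj lam' = insert β' (betaSet aj lam \ {β})) :
    ∀ᶠ K : ℕ in atTop, ∀ g : ℤ → ℤ, ∑ b ∈ range K, g (bead aj lam' b)
      = ∑ b ∈ range K, g (bead aj lam b) - g β + g β' := by
  filter_upwards [ev_zero lam, ev_zero lam', eventually_ge_atTop (aj - β).toNat,
    eventually_ge_atTop (aj - β').toNat] with K h1 h2 h3 h4 g
  rw [sum_bead, sum_bead]
  have e1 : (range K).image (bead aj lam')
      = insert β' (((range K).image (bead aj lam)).erase β) := by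
    ext x
    rw [mem_image_bead _ _ _ h2, hB, Finset.mem_insert, Finset.mem_erase, mem_image_bead _ _ _ h1]
    simp only [Set.mem_insert_iff, Set.mem_sdiff, Set.mem_singleton_iff]
    constructor
    · rintro ⟨h | h, h'⟩
      · exact Or.inl h
      · exact Or.inr ⟨h.2, h.1, h'⟩
    · rintro (h | h)
      · exact ⟨Or.inl h, by omega⟩
      · exact ⟨Or.inr ⟨h.2.1, h.1⟩, h.2.2⟩
  have e2 : β ∈ (range K).image (bead aj lam) := by
    rw [mem_image_bead _ _ _ h1]; exact ⟨hβ, by omega⟩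
  have e3 : β' ∉ ((range K).image (bead aj lam)).erase β := by
    rw [Finset.mem_erase, mem_image_bead _ _ _ h1]; tauto
  rw [e1, Finset.sum_insert e3, ← Finset.add_sum_erase _ _ e2]
  ring

lemma sum_same (aj : ℤ) (lam lam' : PartitionFun)
    (hB : betaSet aj lam' = betaSet aj lam) :
    ∀ᶠ K : ℕ in atTop, ∀ g : ℤ → ℤ, ∑ b ∈ range K, g (bead aj lam' b)
      = ∑ b ∈ range K, g (bead aj lam b) := by
  filter_upwards [ev_zero lam, ev_zero lam'] with K h1 h2 g
  rw [sum_bead, sum_bead]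
  congr 1
  ext x
  rw [mem_image_bead _ _ _ h2, hB, mem_image_bead _ _ _ h1]

/-- indicator of residue -/
noncomputable def ind (e : ℕ) (s x : ℤ) : ℤ := if x % (e : ℤ) = s % e then 1 else 0

/-- floor function -/
def fl (e : ℕ) (s x : ℤ) : ℤ := (x - s) / (e : ℤ)

lemma fl_step (e : ℕ) (he : 2 ≤ e) (s y : ℤ) : fl e s y = fl e s (y - 1) + ind e s y := by
  unfold fl ind
  have he' : (0 : ℤ) < e := by omega
  have h1 := Int.emod_add_mul_ediv (y - s) e
  have h2 := Int.emod_nonneg (y - s) he'.ne'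
  have h3 := Int.emod_lt_of_pos (y - s) he'
  have key : y % (e : ℤ) = s % e ↔ (y - s) % e = 0 := Int.emod_eq_emod_iff_emod_sub_eq_zero
  set q := (y - s) / (e : ℤ)
  set ρ := (y - s) % (e : ℤ)
  by_cases h : ρ = 0
  · rw [if_pos (key.2 h)]
    have : (y - 1 - s) = (e - 1) + e * (q - 1) := by rw [mul_sub]; linarith
    rw [this, Int.add_mul_ediv_left _ _ he'.ne', Int.ediv_eq_zero_of_lt (by omega) (by omega)]
    ring
  · rw [if_neg (fun hh => h (key.1 hh))]
    have : (y - 1 - s) = (ρ - 1) + e * q := by linarith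
    rw [this, Int.add_mul_ediv_left _ _ he'.ne', Int.ediv_eq_zero_of_lt (by omega) (by omega)]
    ring

lemma sum_ind_range (e : ℕ) (he : 2 ≤ e) (s A : ℤ) (n : ℕ) :
    ∑ c ∈ range n, ind e s (A + c) = fl e s (A + n - 1) - fl e s (A - 1) := by
  induction n with
  | zero => simp
  | succ n ih =>
    rw [Finset.sum_range_succ, ih]
    have := fl_step e he s (A + n)
    push_cast
    rw [show A + ((n : ℤ) + 1) - 1 = A + n by ring]
    linarith

lemma sum_ind_Ioc (e : ℕ) (he : 2 ≤ e) (s p q : ℤ) (hpq : p ≤ q) :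
    ∑ x ∈ Ioc p q, ind e s x = fl e s q - fl e s p := by
  induction q, hpq using Int.le_induction with
  | base => simp
  | succ q h ih =>
    have : Ioc p (q + 1) = insert (q + 1) (Ioc p q) := by
      ext x; simp only [Finset.mem_Ioc, Finset.mem_insert]; omega
    rw [this, Finset.sum_insert (by simp), ih, fl_step e he s (q + 1)]
    ring_nf

lemma nodeCount_eq {r e : ℕ} (he : 2 ≤ e) (a : Fin r → ℤ) (lam : Multipartition r) :
    ∀ᶠ K : ℕ in atTop, ∀ s : ℤ, (nodeCount e a lam s : ℤ) =
      ∑ j : Fin r, (∑ b ∈ range K, fl e s (bead (a j) (lam j) b)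
        - ∑ b ∈ range K, fl e s (a j - b - 1)) := by
  have h1 : ∀ᶠ K : ℕ in atTop, ∀ j, ∀ b, K ≤ b → (lam j).part b = 0 :=
    eventually_all.2 fun j => ev_zero (lam j)
  filter_upwards [h1] with K hK s
  let T : Finset (Σ _ : Fin r, Σ _ : ℕ, ℕ) := univ.sigma fun j => (range K).sigma fun b =>
    (range ((lam j).part b)).filter fun c => (a j + (c : ℤ) - (b : ℤ)) % (e : ℤ) = s % e
  let φ : (Σ _ : Fin r, Σ _ : ℕ, ℕ) → Node r := fun x => (x.2.1, x.2.2, x.1)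
  have hφ : Function.Injective φ := by
    rintro ⟨j, b, c⟩ ⟨j', b', c'⟩ h
    simp only [φ, Prod.mk.injEq] at h
    obtain ⟨rfl, rfl, rfl⟩ := h
    rfl
  have hset : {x : Node r | (lam x.2.2).InDiag x.1 x.2.1 ∧
    (a x.2.2 + (x.2.1 : ℤ) - (x.1 : ℤ)) % (e : ℤ) = s % e} = ((T.image φ : Finset (Node r)) : Set (Node r)) := by
    ext ⟨b, c, j⟩
    simp only [Set.mem_setOf_eq, Finset.coe_image, Set.mem_image, Finset.mem_coe, T, φ,
      Finset.mem_sigma, Finset.mem_filter, Finset.mem_range, Finset.mem_univ, true_and,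
      PartitionFun.InDiag]
    constructor
    · rintro ⟨h, h'⟩
      refine ⟨⟨j, b, c⟩, ⟨?_, h, h'⟩, rfl⟩
      change b < K
      by_contra hb
      have := hK j b (by omega)
      omega
    · rintro ⟨⟨j', b', c'⟩, ⟨_, h, h'⟩, heq⟩
      simp only [Prod.mk.injEq] at heq
      obtain ⟨rfl, rfl, rfl⟩ := heq
      exact ⟨h, h'⟩
  unfold nodeCount
  rw [hset, Set.ncard_coe_finset, Finset.card_image_of_injective _ hφ]
  simp only [T, Finset.card_sigma]
  push_cast
  refine Finset.sum_congr rfl fun j _ => ?_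
  rw [← Finset.sum_sub_distrib]
  refine Finset.sum_congr rfl fun b _ => ?_
  have := sum_ind_range e he s (a j - b) ((lam j).part b)
  rw [show bead (a j) (lam j) b = a j - b + ((lam j).part b) - 1 by unfold bead; ring, ← this]
  rw [Finset.card_filter]
  push_cast
  refine Finset.sum_congr rfl fun c _ => ?_
  unfold ind
  rw [show a j + (c : ℤ) - b = a j - b + c by ring]

lemma ind_shift (e : ℕ) (s x : ℤ) : ind e s (x + 1) = ind e (s - 1) x := by
  unfold ind
  have : (x + 1) % (e : ℤ) = s % e ↔ x % (e : ℤ) = (s - 1) % e := by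
    rw [Int.emod_eq_emod_iff_emod_sub_eq_zero, Int.emod_eq_emod_iff_emod_sub_eq_zero]
    ring_nf
  simp only [this]

lemma delta_eq_s6 {r e : ℕ} (a : Fin r → ℤ) (lam : Multipartition r) (j : Fin r) :
    ∀ᶠ K : ℕ in atTop, ∀ s : ℤ, delta e a lam s j =
      ∑ b ∈ range K, ind e s (bead (a j) (lam j) b)
      - ∑ b ∈ range K, ind e (s - 1) (bead (a j) (lam j) b) - ind e (s - 1) (a j - K - 1) := by
  filter_upwards [ev_zero (lam j)] with K hK s
  set β := bead (a j) (lam j) with hβ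
  set P := (lam j).part with hP
  have hanti : Antitone P := (lam j).antitone
  have hβP : ∀ b, β b = P b + a j - (b + 1) := fun b => rfl
  have hrem : (removableCount e a lam s j : ℤ) =
      ∑ b ∈ range K, (if P (b+1) < P b then ind e s (β b) else 0) := by
    have hset : {p : ℕ × ℕ | (lam j).Removable p.1 p.2 ∧
      (a j + (p.2 : ℤ) - (p.1 : ℤ)) % (e : ℤ) = s % e} =
      ((((range K).filter fun b => P (b+1) < P b ∧ (β b) % (e : ℤ) = s % e).image
        (fun b => (b, P b - 1)) : Finset (ℕ × ℕ)) : Set (ℕ × ℕ)) := by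
      ext ⟨b, c⟩
      simp only [Set.mem_setOf_eq, Finset.coe_image, Set.mem_image, Finset.mem_coe,
        Finset.mem_filter, Finset.mem_range, PartitionFun.Removable, ← hP, Prod.mk.injEq]
      constructor
      · rintro ⟨⟨h1, h2⟩, h3⟩
        refine ⟨b, ⟨?_, by omega, ?_⟩, rfl, by omega⟩
        · by_contra hb
          have := hK b (by omega)
          omega
        · rw [← h3, hβP, h1]; push_cast; ring_nf
      · rintro ⟨b', ⟨h1, h2, h3⟩, rfl, rfl⟩
        refine ⟨⟨by omega, by omega⟩, ?_⟩
        rw [← h3, hβP, Nat.cast_sub (by omega)]; push_cast; ring_nf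
    unfold removableCount
    rw [hset, Set.ncard_coe_finset, Finset.card_image_of_injective _
      (fun x y h => (Prod.mk.inj h).1), Finset.card_filter]
    push_cast
    refine Finset.sum_congr rfl fun b _ => ?_
    unfold ind
    split_ifs <;> tauto
  have hadd : (addableCount e a lam s j : ℤ) =
      ∑ b ∈ range (K+1), (if b = 0 ∨ P b < P (b-1) then ind e (s-1) (β b) else 0) := by
    have hset : {p : ℕ × ℕ | (lam j).Addable p.1 p.2 ∧
      (a j + (p.2 : ℤ) - (p.1 : ℤ)) % (e : ℤ) = s % e} =
      ((((range (K+1)).filter fun b => (b = 0 ∨ P b < P (b-1)) ∧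
        (β b + 1) % (e : ℤ) = s % e).image
        (fun b => (b, P b)) : Finset (ℕ × ℕ)) : Set (ℕ × ℕ)) := by
      ext ⟨b, c⟩
      simp only [Set.mem_setOf_eq, Finset.coe_image, Set.mem_image, Finset.mem_coe,
        Finset.mem_filter, Finset.mem_range, PartitionFun.Addable, ← hP, Prod.mk.injEq]
      constructor
      · rintro ⟨⟨h1, h2⟩, h3⟩
        refine ⟨b, ⟨?_, h2, ?_⟩, rfl, h1⟩
        · by_contra hb
          have := hK (b-1) (by omega)
          omega
        · rw [← h3, hβP, h1]; ring_nf
      · rintro ⟨b', ⟨h1, h2, h3⟩, rfl, rfl⟩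
        refine ⟨⟨rfl, h2⟩, ?_⟩
        rw [← h3, hβP]; ring_nf
    unfold addableCount
    rw [hset, Set.ncard_coe_finset, Finset.card_image_of_injective _
      (fun x y h => (Prod.mk.inj h).1), Finset.card_filter]
    push_cast
    refine Finset.sum_congr rfl fun b _ => ?_
    rw [← ind_shift]
    unfold ind
    split_ifs <;> tauto
  unfold delta
  rw [hrem, hadd]
  have hlast : a j - K - 1 = β K := by rw [hβP, hK K le_rfl]; push_cast; ring
  rw [hlast, sub_sub, ← Finset.sum_range_succ (fun b => ind e (s-1) (β b)) K,
    Finset.sum_range_succ' (fun b => ind e (s-1) (β b)) K, Finset.sum_range_succ' _ K]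
  have hterm : ∀ b, (if P (b+1) < P b then ind e s (β b) else 0) - (if b + 1 = 0 ∨ P (b+1) < P (b+1-1) then ind e (s-1) (β (b+1)) else 0) = ind e s (β b) - ind e (s-1) (β (b+1)) := by
    intro b
    simp only [Nat.add_sub_cancel, Nat.succ_ne_zero, false_or]
    by_cases h : P (b+1) < P b
    · simp [h]
    · have : P (b+1) = P b := le_antisymm (hanti (Nat.le_succ b)) (by omega)
      rw [if_neg h, if_neg h, ← ind_shift, hβP, hβP, this]
      push_cast
      ring_nf
  have := Finset.sum_congr (rfl : range K = range K) (fun b _ => hterm b)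
  rw [Finset.sum_sub_distrib, Finset.sum_sub_distrib] at this
  simp only [true_or, if_true]
  linarith

/-- `X` is the lowest bead on the runner of `t`. -/
def IsRun (e : ℕ) (B : Set ℤ) (t X : ℤ) : Prop :=
  X % (e : ℤ) = t % e ∧ ∀ x : ℤ, x % (e : ℤ) = t % e → (x ∈ B ↔ x ≤ X)

lemma exists_run {e : ℕ} (he : 2 ≤ e) (aj : ℤ) (lam : PartitionFun) (hc : IsECore e aj lam) (t : ℤ) :
    ∃ X, IsRun e (betaSet aj lam) t X := by
  have he' : (0 : ℤ) < e := by omega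
  obtain ⟨N, hN⟩ := lam.finite_support
  have hlow : ∀ x : ℤ, x < aj - N → x ∈ betaSet aj lam := by
    intro x hx
    refine ⟨(aj - 1 - x).toNat, ?_⟩
    rw [hN _ (by omega)]
    push_cast
    omega
  have hup : ∀ x ∈ betaSet aj lam, x ≤ lam.part 0 + aj := by
    rintro x ⟨b, rfl⟩
    have := lam.antitone (Nat.zero_le b)
    omega
  obtain ⟨X, ⟨hX1, hX2⟩, hX3⟩ := Int.exists_greatest_of_bdd
    (P := fun x => x % (e : ℤ) = t % e ∧ x ∈ betaSet aj lam)
    ⟨lam.part 0 + aj, fun z hz => hup z hz.2⟩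
    ⟨t - e * (|t| + |aj - N| + 1), by simp [Int.sub_mul_emod_self_left], hlow _ (by
      have := le_abs_self t
      have := neg_abs_le (aj - N)
      have := abs_nonneg (aj - N)
      have := abs_nonneg t
      nlinarith)⟩
  refine ⟨X, hX1, fun x hx => ⟨fun h => hX3 x ⟨hx, h⟩, fun h => ?_⟩⟩
  have hdown : ∀ n : ℕ, X - e * n ∈ betaSet aj lam := by
    intro n
    induction n with
    | zero => simpa using hX2
    | succ n ih =>
      have := hc _ ih
      push_cast
      rwa [show X - (e : ℤ) * (n + 1) = X - e * n - e by ring]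
  have hd : (e : ℤ) ∣ X - x := Int.dvd_of_emod_eq_zero
    (Int.emod_eq_emod_iff_emod_sub_eq_zero.1 (hX1.trans hx.symm))
  obtain ⟨q, hq⟩ := hd
  have hq0 : 0 ≤ q := by
    by_contra hq0
    have : e * q < 0 := by nlinarith
    omega
  have := hdown q.toNat
  rw [Int.toNat_of_nonneg hq0, ← hq] at this
  simpa using this

lemma IsRun.sSup_eq {e : ℕ} {B : Set ℤ} {t X : ℤ} (h : IsRun e B t X) :
    sSup {x : ℤ | x % (e : ℤ) = t % e ∧ x ∈ B} = X := by
  apply IsGreatest.csSup_eq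
  exact ⟨⟨h.1, (h.2 X h.1).2 le_rfl⟩, fun x hx => (h.2 x hx.1).1 hx.2⟩

lemma IsRun.sInf_eq {e : ℕ} (he : 2 ≤ e) {B : Set ℤ} {t X : ℤ} (h : IsRun e B t X) :
    sInf {x : ℤ | x % (e : ℤ) = t % e ∧ x ∉ B} = X + e := by
  apply IsLeast.csInf_eq
  have h1 : (X + e) % (e : ℤ) = t % e := by rw [Int.add_emod_right]; exact h.1
  refine ⟨⟨h1, ?_⟩, ?_⟩
  · rw [h.2 _ h1]; omega
  · rintro x ⟨hx, hx'⟩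
    rw [h.2 x hx] at hx'
    obtain ⟨q, hq⟩ := Int.dvd_of_emod_eq_zero
      (Int.emod_eq_emod_iff_emod_sub_eq_zero.1 (hx.trans h.1.symm))
    have : 0 < q := by
      by_contra hq0
      have : e * q ≤ 0 := by nlinarith
      omega
    nlinarith

lemma moveBead_eq {e : ℕ} (he : 2 ≤ e) {B : Set ℤ} {i l : ℕ} {Xi Xl : ℤ} (hi : IsRun e B i Xi)
    (hl : IsRun e B l Xl) : moveBead e i l B = insert (Xl + e) (B \ {Xi}) := by
  unfold moveBead
  rw [hi.sSup_eq, hl.sInf_eq he]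

lemma moveBead_back {e : ℕ} (he : 2 ≤ e) {B : Set ℤ} {i l : ℕ} (hie : i < e) (hle : l < e)
    (hil : i ≠ l) {Xi Xl : ℤ} (hi : IsRun e B i Xi)
    (hl : IsRun e B l Xl) : moveBead e l i (moveBead e i l B) = B := by
  rw [moveBead_eq he hi hl]
  have hne : (i : ℤ) % e ≠ (l : ℤ) % e := by
    rw [Int.emod_eq_of_lt (by omega) (by omega), Int.emod_eq_of_lt (by omega) (by omega)]
    omega
  have hl1 : (Xl + e) % (e : ℤ) = (l : ℤ) % e := by rw [Int.add_emod_right]; exact hl.1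
  have hmi : Xi ∈ B := (hi.2 Xi hi.1).2 le_rfl
  have hml : Xl + e ∉ B := by rw [hl.2 _ hl1]; omega
  have hneX : Xi ≠ Xl + e := by rintro h; exact hml (h ▸ hmi)
  have e1 : sSup {x : ℤ | x % (e : ℤ) = (l : ℤ) % e ∧ x ∈ insert (Xl + e : ℤ) (B \ {Xi})} = Xl + e := by
    apply IsGreatest.csSup_eq
    refine ⟨⟨hl1, Or.inl rfl⟩, ?_⟩
    rintro x ⟨hx, rfl | hx'⟩
    · exact le_rfl
    · have := (hl.2 x hx).1 hx'.1
      omega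
  have e2 : sInf {x : ℤ | x % (e : ℤ) = (i : ℤ) % e ∧ x ∉ insert (Xl + e : ℤ) (B \ {Xi})} = Xi := by
    apply IsLeast.csInf_eq
    refine ⟨⟨hi.1, ?_⟩, ?_⟩
    · rintro (h | h)
      · exact hneX h
      · exact h.2 rfl
    · rintro x ⟨hx, hx'⟩
      by_contra hlt
      push Not at hlt
      exact hx' (Or.inr ⟨(hi.2 x hx).2 hlt.le, by simpa using hlt.ne⟩)
  unfold moveBead
  rw [e1, e2]
  ext x
  simp only [Set.mem_insert_iff, Set.mem_sdiff, Set.mem_singleton_iff]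
  constructor
  · rintro (rfl | ⟨rfl | h, h'⟩)
    · exact hmi
    · exact absurd rfl h'
    · exact h.1
  · intro h
    by_cases hx : x = Xi
    · exact Or.inl hx
    · exact Or.inr ⟨Or.inr ⟨h, hx⟩, fun h' => hml (h' ▸ h)⟩

lemma sum_ind_run {e : ℕ} (he : 2 ≤ e) (aj : ℤ) (lam : PartitionFun) (t X : ℤ)
    (hX : IsRun e (betaSet aj lam) t X) :
    ∀ᶠ K : ℕ in atTop, ∑ b ∈ range K, ind e t (bead aj lam b) = fl e t X - fl e t (aj - K - 1) := by
  filter_upwards [ev_zero lam, eventually_ge_atTop (aj - X).toNat] with K hK hKX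
  rw [sum_bead, ← sum_ind_Ioc e he t _ _ (by omega)]
  unfold ind
  rw [← Finset.sum_filter, ← Finset.sum_filter]
  congr 1
  ext x
  simp only [Finset.mem_filter, mem_image_bead _ _ _ hK, Finset.mem_Ioc]
  constructor
  · rintro ⟨⟨h1, h2⟩, h3⟩
    exact ⟨⟨by omega, (hX.2 x h3).1 h1⟩, h3⟩
  · rintro ⟨⟨h1, h2⟩, h3⟩
    exact ⟨⟨(hX.2 x h3).2 h2, by omega⟩, h3⟩

lemma delta_run {r e : ℕ} (he : 2 ≤ e) (a : Fin r → ℤ) (lam : Multipartition r) (j : Fin r)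
    (s X Y : ℤ) (hX : IsRun e (betaSet (a j) (lam j)) s X)
    (hY : IsRun e (betaSet (a j) (lam j)) (s - 1) Y) :
    delta e a lam s j = fl e s X - fl e (s - 1) Y := by
  obtain ⟨K, h1, h2, h3⟩ := ((delta_eq_s6 (e := e) a lam j).and
    ((sum_ind_run he _ _ _ _ hX).and (sum_ind_run he _ _ _ _ hY))).exists
  rw [h1, h2, h3]
  have := fl_step e he (s - 1) (a j - K - 1)
  have h4 : fl e (s - 1) (a j - K - 1 - 1) = fl e s (a j - K - 1) := by
    unfold fl; ring_nf
  linarith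

lemma delta_same {r e : ℕ} (a : Fin r → ℤ) (m m' : Multipartition r) (j : Fin r)
    (hB : betaSet (a j) (m' j) = betaSet (a j) (m j)) (s : ℤ) :
    delta e a m' s j = delta e a m s j := by
  obtain ⟨K, h1, h2, h3⟩ := ((delta_eq_s6 (e := e) a m j).and
    ((delta_eq_s6 (e := e) a m' j).and (sum_same _ _ _ hB))).exists
  rw [h1, h2, h3, h3]

lemma delta_move {r e : ℕ} (a : Fin r → ℤ) (m m' : Multipartition r) (j : Fin r) (β β' : ℤ)
    (hβ : β ∈ betaSet (a j) (m j)) (hβ' : β' ∉ betaSet (a j) (m j))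
    (hB : betaSet (a j) (m' j) = insert β' (betaSet (a j) (m j) \ {β})) (s : ℤ) :
    delta e a m' s j = delta e a m s j - (ind e s β - ind e (s-1) β)
      + (ind e s β' - ind e (s-1) β') := by
  obtain ⟨K, h1, h2, h3⟩ := ((delta_eq_s6 (e := e) a m j).and
    ((delta_eq_s6 (e := e) a m' j).and (sum_move _ _ _ _ _ hβ hβ' hB))).exists
  rw [h1, h2, h3, h3]
  ring

lemma weight_shift {r e : ℕ} (a : Fin r → ℤ) (m m' : Multipartition r) (g : ℤ)
    (h : ∀ s, (nodeCount e a m s : ℤ) = nodeCount e a m' s + g) :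
    weight e a m = weight e a m' + (g : ℚ) * r := by
  have h' : ∀ s, (nodeCount e a m s : ℚ) = nodeCount e a m' s + g := by
    intro s
    exact_mod_cast h s
  unfold weight
  simp only [h', Finset.sum_add_distrib, Finset.sum_const, Finset.card_univ, Fintype.card_fin,
    nsmul_eq_mul, add_sub_add_right_eq_sub]
  ring

lemma dmin_le {r e : ℕ} (a : Fin r → ℤ) (m : Multipartition r) (s : ℤ) (j : Fin r) :
    dmin e a m s ≤ delta e a m s j := by
  apply csInf_le
  · exact (Set.finite_range (fun j => delta e a m s j)).bddBelow
  · exact ⟨j, rfl⟩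

lemma dmin_mem {r e : ℕ} (hr : 0 < r) (a : Fin r → ℤ) (m : Multipartition r) (s : ℤ) :
    ∃ j, delta e a m s j = dmin e a m s := by
  have : {x : ℤ | ∃ j : Fin r, delta e a m s j = x}.Nonempty := ⟨_, ⟨0, hr⟩, rfl⟩
  exact Int.csInf_mem this (Set.finite_range (fun j => delta e a m s j)).bddBelow

lemma fl_add (e : ℕ) (he : 2 ≤ e) (s x q : ℤ) : fl e s (x + e * q) = fl e s x + q := by
  unfold fl
  rw [show x + e * q - s = (x - s) + e * q by ring, Int.add_mul_ediv_left _ _ (by omega)]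

lemma ind_congr (e : ℕ) {s x y : ℤ} (h : x % (e : ℤ) = y % e) : ind e s x = ind e s y := by
  unfold ind; rw [h]

lemma ind_cases (e : ℕ) (s x : ℤ) : (ind e s x = 1 ∧ x % (e : ℤ) = s % e) ∨ ind e s x = 0 := by
  unfold ind
  split_ifs with h
  · exact Or.inl ⟨rfl, h⟩
  · exact Or.inr rfl

lemma IsRun.congr {e : ℕ} {B : Set ℤ} {t t' X : ℤ} (h : IsRun e B t X) (ht : t % (e : ℤ) = t' % e) :
    IsRun e B t' X := by
  unfold IsRun at *
  rwa [← ht]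

lemma step {e r : ℕ} (he : 2 ≤ e) (hr : 0 < r) (a : Fin r → ℤ) (m m' : Multipartition r)
    (hm : IsMulticore e a m) (i l : ℕ) (j k : Fin r) (hie : i < e) (hle : l < e) (hil : i ≠ l)
    (hs : IsSwap e a i l j k m m') (hw : weight e a m' < weight e a m) :
    ∃ g : ℤ, weight e a m = weight e a m' + (g : ℚ) * r ∧
      ∀ s, dmin e a m' s ≤ dmin e a m s + g := by
  obtain ⟨Xij, hij⟩ := exists_run he _ _ (hm j) i
  obtain ⟨Xlj, hlj⟩ := exists_run he _ _ (hm j) l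
  obtain ⟨Xik, hik⟩ := exists_run he _ _ (hm k) i
  obtain ⟨Xlk, hlk⟩ := exists_run he _ _ (hm k) l
  by_cases hjk : j = k
  · subst hjk
    exfalso
    have hB : ∀ j', betaSet (a j') (m' j') = betaSet (a j') (m j') := by
      intro j'
      rw [hs j']
      unfold swapSets
      by_cases h : j' = j
      · subst h
        simp only [Function.update_self]
        exact moveBead_back he hie hle hil hij hlj
      · simp [Function.update_of_ne h]
    obtain ⟨K, h1, h2, h3⟩ := ((nodeCount_eq he a m).and ((nodeCount_eq he a m').and
      (eventually_all.2 fun j => sum_same _ _ _ (hB j)))).exists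
    have := weight_shift (e := e) a m m' 0 (by
      intro s
      rw [h1, h2]
      simp only [h3, add_zero])
    simp only [Int.cast_zero, zero_mul, add_zero] at this
    exact hw.ne' this
  have hBj : betaSet (a j) (m' j) = insert (Xlj + (e : ℤ)) (betaSet (a j) (m j) \ {Xij}) := by
    rw [hs j, ← moveBead_eq he hij hlj]
    unfold swapSets
    rw [Function.update_of_ne hjk, Function.update_self]
  have hBk : betaSet (a k) (m' k) = insert (Xik + (e : ℤ)) (betaSet (a k) (m k) \ {Xlk}) := by
    rw [hs k, ← moveBead_eq he hlk hik]
    unfold swapSets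
    rw [Function.update_self, Function.update_of_ne (Ne.symm hjk)]
  have hBo : ∀ j', j' ≠ j → j' ≠ k → betaSet (a j') (m' j') = betaSet (a j') (m j') := by
    intro j' h1 h2
    rw [hs j']
    unfold swapSets
    rw [Function.update_of_ne h2, Function.update_of_ne h1]
  have rlj : (Xlj + e) % (e : ℤ) = (l : ℤ) % e := by rw [Int.add_emod_right]; exact hlj.1
  have rik : (Xik + e) % (e : ℤ) = (i : ℤ) % e := by rw [Int.add_emod_right]; exact hik.1
  have mij : Xij ∈ betaSet (a j) (m j) := (hij.2 _ hij.1).2 le_rfl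
  have mlk : Xlk ∈ betaSet (a k) (m k) := (hlk.2 _ hlk.1).2 le_rfl
  have mlj : Xlj + (e : ℤ) ∉ betaSet (a j) (m j) := by rw [hlj.2 _ rlj]; omega
  have mik : Xik + (e : ℤ) ∉ betaSet (a k) (m k) := by rw [hik.2 _ rik]; omega
  obtain ⟨p, hp⟩ := Int.dvd_of_emod_eq_zero
      (Int.emod_eq_emod_iff_emod_sub_eq_zero.1 (hlj.1.trans hlk.1.symm))
  obtain ⟨q, hq⟩ := Int.dvd_of_emod_eq_zero
      (Int.emod_eq_emod_iff_emod_sub_eq_zero.1 (hik.1.trans hij.1.symm))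
  have hp' : ∀ s, fl e s Xlj = fl e s Xlk + p := by
    intro s; rw [← fl_add e he, ← hp]; congr 1; ring
  have hq' : ∀ s, fl e s Xik = fl e s Xij + q := by
    intro s; rw [← fl_add e he, ← hq]; congr 1; ring
  have hplus : ∀ s x, fl e s (x + e) = fl e s x + 1 := by
    intro s x
    rw [← fl_add e he, mul_one]
  have hcount : ∀ s, (nodeCount e a m s : ℤ) = nodeCount e a m' s + (-(p + q + 2)) := by
    intro s
    have hev : ∀ᶠ K : ℕ in atTop, ∀ j', j' ≠ j → j' ≠ k → ∀ g : ℤ → ℤ,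
      ∑ b ∈ range K, g (bead (a j') (m' j') b) = ∑ b ∈ range K, g (bead (a j') (m j') b) := by
      rw [eventually_all]
      intro j'
      by_cases h : j' ≠ j ∧ j' ≠ k
      · filter_upwards [sum_same _ _ _ (hBo j' h.1 h.2)] with K hK _ _
        exact hK
      · exact Eventually.of_forall fun K h1 h2 => absurd ⟨h1, h2⟩ h
    obtain ⟨K, h1, h2, h3, h4, h5⟩ := ((nodeCount_eq he a m).and ((nodeCount_eq he a m').and
      (hev.and ((sum_move _ _ _ _ _ mij mlj hBj).and (sum_move _ _ _ _ _ mlk mik hBk))))).exists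
    rw [h1, h2]
    rw [← sub_eq_iff_eq_add', ← Finset.sum_sub_distrib]
    rw [Finset.sum_eq_add j k hjk]
    · rw [h4, h5, hplus, hplus, hp', hq']
      ring
    · intro c _ hc
      rw [h3 c hc.1 hc.2]; ring
    · simp
    · simp
  have hwt := weight_shift (e := e) a m m' _ hcount
  refine ⟨_, hwt, ?_⟩
  have hg : 0 < -(p + q + 2) := by
    have hr' : (0 : ℚ) < r := by exact_mod_cast hr
    have h1 : (0 : ℚ) < ((-(p + q + 2) : ℤ) : ℚ) * r := by linarith
    have h2 := (mul_pos_iff_of_pos_right hr').1 h1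
    exact_mod_cast h2
  intro s
  obtain ⟨j0, hj0⟩ := dmin_mem (e := e) hr a m s
  rw [← hj0]
  have dj := delta_move (e := e) a m m' j _ _ mij mlj hBj s
  have dk := delta_move (e := e) a m m' k _ _ mlk mik hBk s
  rw [ind_congr e hij.1, ind_congr e hij.1, ind_congr e rlj, ind_congr e rlj] at dj
  rw [ind_congr e hlk.1, ind_congr e hlk.1, ind_congr e rik, ind_congr e rik] at dk
  have lj := dmin_le (e := e) a m' s j
  have lk := dmin_le (e := e) a m' s k
  have l0 := dmin_le (e := e) a m' s j0
  -- the two extreme cases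
  have c1 : (i : ℤ) % e = s % e → (l : ℤ) % e = (s - 1) % e →
      delta e a m s j - delta e a m s k = -(p + q) := by
    intro h1 h2
    rw [delta_run he a m j s _ _ (hij.congr h1) (hlj.congr h2),
      delta_run he a m k s _ _ (hik.congr h1) (hlk.congr h2), hp', hq']
    ring
  have c2 : (l : ℤ) % e = s % e → (i : ℤ) % e = (s - 1) % e →
      delta e a m s k - delta e a m s j = -(p + q) := by
    intro h1 h2
    rw [delta_run he a m j s _ _ (hlj.congr h1) (hij.congr h2),
      delta_run he a m k s _ _ (hlk.congr h1) (hik.congr h2), hp', hq']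
    ring
  have main : (j0 ≠ j ∧ j0 ≠ k) ∨ j0 = j ∨ j0 = k := by tauto
  rcases main with h | h
  · have := delta_same (e := e) a m m' j0 (hBo j0 h.1 h.2) s
    omega
  · have h01 : delta e a m s j0 = delta e a m s j ∨ delta e a m s j0 = delta e a m s k := by
      rcases h with rfl | rfl <;> simp
    have h0j : (j0 = j ∧ delta e a m s j0 = delta e a m s j) ∨
        (j0 = k ∧ delta e a m s j0 = delta e a m s k) := by
      rcases h with rfl | rfl <;> simp
    rcases ind_cases e s i with ⟨u1, v1⟩ | u1 <;> rcases ind_cases e (s-1) i with ⟨u2, v2⟩ | u2 <;>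
    rcases ind_cases e s l with ⟨u3, v3⟩ | u3 <;> rcases ind_cases e (s-1) l with ⟨u4, v4⟩ | u4 <;>
    rw [u1, u2, u3, u4] at dj dk <;>
    first
    | (rcases h0j with ⟨_, h0⟩ | ⟨_, h0⟩ <;> omega)
    | (have := c1 v1 v4
       rcases h0j with ⟨_, h0⟩ | ⟨_, h0⟩ <;> omega)
    | (have := c2 v3 v2
       rcases h0j with ⟨_, h0⟩ | ⟨_, h0⟩ <;> omega)

end helpers

/-- Lemma 4.7: if `m = m_0, …, m_v` is a sequence of multicores with
`m_{t+1} = s^{jk}_{il}(m_t)` and strictly decreasing weights, and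
`w(m) = w(m_v) + h·r` with `h > 0`, then `d_ī(m) ≥ d_ī(m_v) − h`. -/
theorem stmt_6 {e r : ℕ} (he : 2 ≤ e) (hr : 0 < r) (a : Fin r → ℤ)
    (m : Multipartition r) (hcore : IsMulticore e a m)
    (v : ℕ) (seq : ℕ → Multipartition r) (h0 : seq 0 = m)
    (hmc : ∀ t ≤ v, IsMulticore e a (seq t))
    (hstep : ∀ t < v, ∃ (i l : ℕ) (j k : Fin r), i < e ∧ l < e ∧ i ≠ l ∧
      IsSwap e a i l j k (seq t) (seq (t + 1)))
    (hdec : ∀ t < v, weight e a (seq (t + 1)) < weight e a (seq t))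
    (h : ℤ) (hh : 0 < h)
    (hw : weight e a m = weight e a (seq v) + (h : ℚ) * (r : ℚ))
    (ibar : ℤ) :
    dmin e a m ibar ≥ dmin e a (seq v) ibar - h := by
  have hr' : (r : ℚ) ≠ 0 := by exact_mod_cast hr.ne'
  have key : ∀ t ≤ v, ∃ g : ℤ, weight e a (seq 0) = weight e a (seq t) + (g : ℚ) * r ∧
      dmin e a (seq t) ibar ≤ dmin e a (seq 0) ibar + g := by
    intro t
    induction t with
    | zero => intro _; exact ⟨0, by simp, by simp⟩
    | succ t ih =>
      intro ht
      obtain ⟨g, h1, h2⟩ := ih (by omega)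
      obtain ⟨i, l, j, k, hi, hl, hil, hsw⟩ := hstep t (by omega)
      obtain ⟨g', h3, h4⟩ := step he hr a _ _ (hmc t (by omega)) i l j k hi hl hil hsw
        (hdec t (by omega))
      refine ⟨g + g', ?_, ?_⟩
      · rw [h1, h3]; push_cast; ring
      · have := h4 ibar
        omega
  obtain ⟨g, h1, h2⟩ := key v le_rfl
  rw [h0] at h1 h2
  have h3 : (g : ℚ) * r = (h : ℚ) * r := by linarith
  have h4 : g = h := by exact_mod_cast mul_right_cancel₀ hr' h3
  subst h4
  omega

end AK
end
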